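/- Let L be a 3×3 integer matrix with determinant ±1 whose characteristic polynomial is irreducible over ℚ and has three real roots ν, μ, λ with 0 < ν < 1 < μ < λ, and let v ∈ ℝ³ be a unit eigenvector of L for the eigenvalue μ. Then there exists a constant C > 0 such that for every D ≥ 1, every x₀ ∈ ℝ³ and every y ∈ ℝ³, there exist t ∈ [0, D] and m ∈ ℤ³ with ‖x₀ + t·v − y − m‖ ≤ C/√D. (Equivalently: the projection to the torus T³ = ℝ³/ℤ³ of any arc of length D of a line in the direction v is C/√D-dense in T³.) -/

import Mathlib

open Polynomial

/-!
Let `d` be the dimension and let `φ` be the left eigenvector dual to `v`. For `s > 0` let `g` act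
as `s ^ (1 - d)` on the line spanned by `v` and as `s` on the hyperplane `ker φ`; it has determinant
`1` and commutes with the matrix. By Minkowski's theorem the lattice `g ℤᵈ` has a nonzero vector of
norm bounded independently of `s`. Irreducibility makes every nonzero integer vector cyclic, so the
images of this vector under the powers of the matrix form a basis contained in `g ℤᵈ`, still of
bounded size. Hence every point is within bounded distance of `g ℤᵈ`. Undoing `g`, every point is
congruent modulo `ℤᵈ` to one whose `v`-coordinate is `O(s ^ (d - 1))` and whose `ker φ`-part is
`O(1 / s)`, and moving along `v` removes the former.
-/

open Module MeasureTheory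

section Endomorphism

variable {K V : Type*} [Field K] [AddCommGroup V] [Module K V]

lemma exists_dual_eigenvector_of_isSemisimple {f : End K V} (hf : f.IsSemisimple) {μ : K} {v : V}
    (hv : f.HasEigenvector μ v) : ∃ φ : Dual K V, φ v = 1 ∧ ∀ x, φ (f x) = μ * φ x := by
  have hline : K ∙ v ∈ f.invtSubmodule := by
    rw [Module.End.mem_invtSubmodule, Submodule.span_singleton_le_iff_mem]
    exact Submodule.mem_span_singleton.mpr ⟨μ, hv.apply_eq_smul.symm⟩
  obtain ⟨W, hW, hcompl⟩ := Module.End.isSemisimple_iff.mp hf _ hline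
  have hvW : v ∉ W := fun h ↦
    hv.2 (Submodule.disjoint_def.mp hcompl.disjoint v (Submodule.mem_span_singleton_self v) h)
  obtain ⟨ψ, hψv, hWψ⟩ := Submodule.exists_le_ker_of_notMem hvW
  refine ⟨(ψ v)⁻¹ • ψ, by simp [hψv], fun x ↦ ?_⟩
  have hx : x ∈ K ∙ v ⊔ W := hcompl.sup_eq_top ▸ Submodule.mem_top
  obtain ⟨_, hu, w, hw, rfl⟩ := Submodule.mem_sup.mp hx
  obtain ⟨a, rfl⟩ := Submodule.mem_span_singleton.mp hu
  have hψw : ψ w = 0 := hWψ hw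
  have hψfw : ψ (f w) = 0 := hWψ (hW hw)
  simp only [map_add, map_smul, LinearMap.smul_apply, hv.apply_eq_smul, hψw, hψfw, smul_eq_mul]
  ring

/-- The endomorphism which, when `φ v = 1`, multiplies the line `K ∙ v` by `a` and the complementary
hyperplane `ker φ` by `c`. It is used to renormalize the long arcs in direction `v`. -/
def directionalScaling (φ : Dual K V) (v : V) (a c : K) : End K V :=
  c • 1 + (a - c) • φ.smulRight v

variable {φ : Dual K V} {v : V} {a c : K}

lemma directionalScaling_apply (x : V) :
    directionalScaling φ v a c x = c • x + (a - c) • φ x • v := by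
  simp [directionalScaling]

lemma dual_directionalScaling (hφv : φ v = 1) (x : V) :
    φ (directionalScaling φ v a c x) = a * φ x := by
  simp only [directionalScaling_apply, map_add, map_smul, hφv, smul_eq_mul]
  ring

lemma directionalScaling_sub_dual_smul (hφv : φ v = 1) (x : V) :
    directionalScaling φ v a c x - φ (directionalScaling φ v a c x) • v = c • (x - φ x • v) := by
  rw [dual_directionalScaling hφv, directionalScaling_apply]
  module

lemma det_directionalScaling [FiniteDimensional K V] (hφv : φ v = 1) (hc : c ≠ 0) :
    LinearMap.det (directionalScaling φ v a c) = a * c ^ (finrank K V - 1) := by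
  have : Nontrivial V := ⟨v, 0, fun h ↦ by simp [h] at hφv⟩
  have hscale : directionalScaling φ v a c = c • LinearMap.transvection φ ((a / c - 1) • v) := by
    ext x
    rw [directionalScaling_apply, LinearMap.smul_apply, LinearMap.transvection.apply]
    match_scalars <;> field_simp
  rw [hscale, LinearMap.det_smul, LinearMap.transvection.det, map_smul, hφv,
    ← mul_pow_sub_one finrank_pos.ne']
  simp only [smul_eq_mul, mul_one, add_sub_cancel]
  field_simp

lemma commute_directionalScaling {f : End K V} {μ : K} (hfv : f v = μ • v)
    (hφf : ∀ x, φ (f x) = μ * φ x) : Commute f (directionalScaling φ v a c) := by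
  ext x
  simp only [Module.End.mul_apply, directionalScaling_apply, map_add, map_smul, hfv, hφf]
  module

end Endomorphism

section CyclicVector

lemma pow_apply_mem {R M : Type*} [Semiring R] [AddCommMonoid M] [Module R M] {S : Type*}
    [SetLike S M] {s : S} {f : End R M} (hf : ∀ x ∈ s, f x ∈ s) (n : ℕ) {x : M} (hx : x ∈ s) :
    (f ^ n) x ∈ s := by
  rw [Module.End.pow_apply]
  exact Set.MapsTo.iterate hf n hx

lemma linearIndependent_pow_smul_of_irreducible {k A V : Type*} [Field k] [Ring A] [Algebra k A]
    [AddCommGroup V] [Module k V] [Module A V] [IsScalarTower k A V] {q : k[X]}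
    (hq : Irreducible q) {a : A} (ha : aeval a q = 0) {x : V} (hx : x ≠ 0) :
    LinearIndependent k fun j : Fin q.natDegree ↦ a ^ (j : ℕ) • x := by
  rw [Fintype.linearIndependent_iff]
  intro c hc
  set p : k[X] := ∑ j, C (c j) * X ^ (j : ℕ) with hp
  have hpx : aeval a p • x = 0 := by
    simpa [hp, Finset.sum_smul, ← Algebra.smul_def] using hc
  have hp0 : p = 0 := by
    by_contra hp0
    have hndvd : ¬ q ∣ p := fun hdvd ↦ (degree_le_of_dvd hdvd hp0).not_gt <|
      (degree_sum_fin_lt c).trans_eq (degree_eq_natDegree hq.ne_zero).symm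
    obtain ⟨r, s, hrs⟩ := hq.coprime_iff_not_dvd.mpr hndvd
    have hinv : aeval a s * aeval a p = 1 := by simpa [ha] using congrArg (aeval a) hrs
    exact hx (by rw [← one_smul A x, ← hinv, mul_smul, hpx, smul_zero])
  intro j
  simpa [hp, finsetSum_coeff, coeff_C_mul_X_pow, Fin.val_inj] using congrArg (coeff · j) hp0

lemma linearIndependent_real_of_int {E ι : Type*} [NormedAddCommGroup E] [NormedSpace ℝ E]
    [FiniteDimensional ℝ E] [Finite ι] {L : Submodule ℤ E} [DiscreteTopology L] {b : ι → E}
    (hbL : ∀ i, b i ∈ L) (hb : LinearIndependent ℤ b) : LinearIndependent ℝ b := by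
  cases nonempty_fintype ι
  have hspan : Submodule.span ℤ (Set.range b) ≤ L :=
    Submodule.span_le.mpr (Set.range_subset_iff.mpr hbL)
  have hdisc : DiscreteTopology (Submodule.span ℤ (Set.range b)) :=
    DiscreteTopology.of_subset (s := (L : Set E)) ‹_› hspan
  rw [linearIndependent_iff_card_eq_finrank_span] at hb ⊢
  rw [hb, Real.finrank_eq_int_finrank_of_discrete hdisc]

/-- `x` is a cyclic vector of `f`: its iterates under `f` span `V`. This is encoded as independence
of the first `dim V` iterates, which therefore form a basis. -/
def IsCyclicVector {K V : Type*} [Field K] [AddCommGroup V] [Module K V] (f : End K V) (x : V) :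
    Prop :=
  LinearIndependent K fun j : Fin (finrank K V) ↦ (f ^ (j : ℕ)) x

lemma isCyclicVector_of_mem_lattice {E : Type*} [NormedAddCommGroup E] [NormedSpace ℝ E]
    [FiniteDimensional ℝ E] {L : Submodule ℤ E} [DiscreteTopology L] {f : End ℝ E}
    (hfL : ∀ x ∈ L, f x ∈ L) {q : ℚ[X]} (hq : Irreducible q)
    (hfq : f.charpoly = q.map (algebraMap ℚ ℝ)) {x : E} (hxL : x ∈ L) (hx : x ≠ 0) :
    IsCyclicVector f x := by
  let : Module ℚ E := Module.compHom E (algebraMap ℚ ℝ)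
  have hdeg : q.natDegree = finrank ℝ E := by
    rw [← f.charpoly_natDegree, hfq, natDegree_map]
  have hq0 : aeval f q = 0 := by
    rw [← aeval_map_algebraMap ℝ, ← hfq, f.aeval_self_charpoly]
  have hpow : LinearIndependent ℚ fun j : Fin (finrank ℝ E) ↦ (f ^ (j : ℕ)) x :=
    hdeg ▸ linearIndependent_pow_smul_of_irreducible hq hq0 hx
  exact linearIndependent_real_of_int (fun j ↦ pow_apply_mem hfL j hxL) (hpow.restrict_scalars' ℤ)

end CyclicVector

section Lattice

variable {E : Type*} [NormedAddCommGroup E] [NormedSpace ℝ E]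

lemma norm_apply_fract_le {F ι : Type*} [SeminormedAddCommGroup F] [NormedSpace ℝ F] [Fintype ι]
    (b : Basis ι ℝ E) (g : E →ₗ[ℝ] F) (z : E) : ‖g (ZSpan.fract b z)‖ ≤ ∑ i, ‖g (b i)‖ := by
  rw [← b.sum_repr (ZSpan.fract b z), map_sum]
  refine norm_sum_le_of_le _ fun i _ ↦ ?_
  rw [map_smul, norm_smul, ZSpan.repr_fract_apply, Real.norm_eq_abs, Int.abs_fract]
  exact mul_le_of_le_one_left (norm_nonneg _) (Int.fract_lt_one _).le

variable [FiniteDimensional ℝ E] (L : Submodule ℤ E) [DiscreteTopology L]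

lemma exists_norm_apply_le_of_abs_det_eq_one [IsZLattice ℝ L] [Nontrivial E] :
    ∃ R : ℝ, ∀ g : End ℝ E, |LinearMap.det g| = 1 → ∃ x ∈ L, x ≠ 0 ∧ ‖g x‖ ≤ R := by
  let : MeasurableSpace E := borel E
  have : BorelSpace E := ⟨rfl⟩
  have : Countable L.toAddSubgroup := inferInstanceAs (Countable L)
  let vol : Measure E := Measure.addHaar
  let b := Free.chooseBasis ℤ L
  let F := ZSpan.fundamentalDomain (b.ofZLatticeBasis ℝ)
  have hF : vol F * 2 ^ finrank ℝ E < ⊤ :=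
    ENNReal.mul_lt_top (ZSpan.fundamentalDomain_isBounded _).measure_lt_top (by finiteness)
  obtain ⟨R, hR⟩ : ∃ R : ℕ, vol F * 2 ^ finrank ℝ E < vol (Metric.closedBall 0 R) := by
    have hmono : Monotone fun n : ℕ ↦ Metric.closedBall (0 : E) n :=
      fun _ _ h ↦ Metric.closedBall_subset_closedBall (by exact_mod_cast h)
    rwa [← measure_univ_of_isAddLeftInvariant vol, ← Metric.iUnion_closedBall_nat 0,
      hmono.measure_iUnion, lt_iSup_iff] at hF
  refine ⟨R, fun g hg ↦ ?_⟩
  have hvol : vol (g ⁻¹' Metric.closedBall 0 R) = vol (Metric.closedBall 0 R) := by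
    rw [Measure.addHaar_preimage_linearMap vol (fun h ↦ by simp [h] at hg), abs_inv, hg]
    simp
  obtain ⟨x, hx, hgx⟩ := exists_ne_zero_mem_lattice_of_measure_mul_two_pow_lt_measure
    (L := L.toAddSubgroup) (ZLattice.isAddFundamentalDomain b vol)
    (s := g ⁻¹' Metric.closedBall 0 R) (fun y hy ↦ by simpa using hy)
    ((convex_closedBall 0 _).linear_preimage g) (hR.trans_eq hvol.symm)
  exact ⟨x, x.2, by simpa using hx, by simpa using hgx⟩

variable {L}

-- Since `g` commutes with `f`, the iterates under `f` of one short vector of `g L` are again short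
-- vectors of `g L`, with a bound that does not depend on `g`.
lemma exists_norm_apply_sub_le_of_commute [IsZLattice ℝ L] [Nontrivial E] {f : End ℝ E}
    (hfL : ∀ x ∈ L, f x ∈ L) (hcyc : ∀ x ∈ L, x ≠ 0 → IsCyclicVector f x) :
    ∃ R : ℝ, ∀ g : End ℝ E, |LinearMap.det g| = 1 → Commute f g →
      ∀ z, ∃ m ∈ L, ‖g (z - m)‖ ≤ R := by
  obtain ⟨R, hR⟩ := exists_norm_apply_le_of_abs_det_eq_one L
  let F (j : ℕ) : E →L[ℝ] E := LinearMap.toContinuousLinearMap (f ^ j)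
  refine ⟨∑ j : Fin (finrank ℝ E), ‖F j‖ * R, fun g hg hfg z ↦ ?_⟩
  obtain ⟨x, hxL, hx, hgx⟩ := hR g hg
  have : Nonempty (Fin (finrank ℝ E)) := ⟨0, finrank_pos⟩
  let b : Basis (Fin (finrank ℝ E)) ℝ E :=
    basisOfLinearIndependentOfCardEqFinrank (hcyc x hxL hx) (Fintype.card_fin _)
  have hb (j : Fin (finrank ℝ E)) : b j = (f ^ (j : ℕ)) x :=
    congrFun (coe_basisOfLinearIndependentOfCardEqFinrank _ _) j
  have hbL : Submodule.span ℤ (Set.range b) ≤ L :=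
    Submodule.span_le.mpr (Set.range_subset_iff.mpr fun j ↦ hb j ▸ pow_apply_mem hfL j hxL)
  refine ⟨ZSpan.floor b z, hbL (ZSpan.floor b z).2, (norm_apply_fract_le b g z).trans ?_⟩
  gcongr with j
  calc ‖g (b j)‖ = ‖F j (g x)‖ := by
        rw [hb, ← Module.End.mul_apply, ← (hfg.pow_left j).eq]; rfl
    _ ≤ ‖F j‖ * R := (F j).le_opNorm_of_le hgx

lemma exists_abs_dual_le_and_norm_sub_le [IsZLattice ℝ L] {f : End ℝ E}
    (hfL : ∀ x ∈ L, f x ∈ L) (hcyc : ∀ x ∈ L, x ≠ 0 → IsCyclicVector f x) {μ : ℝ} {v : E}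
    (hfv : f v = μ • v) {φ : Dual ℝ E} (hφv : φ v = 1) (hφf : ∀ x, φ (f x) = μ * φ x) :
    ∃ c > 0, ∀ s > 0, ∀ z, ∃ m ∈ L,
      |φ (z - m)| ≤ c * s ^ (finrank ℝ E - 1) ∧ ‖z - m - φ (z - m) • v‖ ≤ c / s := by
  have : Nontrivial E := ⟨v, 0, fun h ↦ by simp [h] at hφv⟩
  obtain ⟨R, hR⟩ := exists_norm_apply_sub_le_of_commute hfL hcyc
  let Φ : E →L[ℝ] ℝ := LinearMap.toContinuousLinearMap φ
  let P : E →L[ℝ] E := LinearMap.toContinuousLinearMap (1 - φ.smulRight v)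
  refine ⟨max 1 (max (‖Φ‖ * R) (‖P‖ * R)), by positivity, fun s hs z ↦ ?_⟩
  set g : End ℝ E := directionalScaling φ v (s ^ (finrank ℝ E - 1))⁻¹ s
  have hdet : |LinearMap.det g| = 1 := by
    rw [det_directionalScaling hφv hs.ne', inv_mul_cancel₀ (by positivity), abs_one]
  obtain ⟨m, hmL, hm⟩ := hR g hdet (commute_directionalScaling hfv hφf) z
  have hΦm : |φ (g (z - m))| ≤ ‖Φ‖ * R := Φ.le_opNorm_of_le hm
  have hPm : ‖g (z - m) - φ (g (z - m)) • v‖ ≤ ‖P‖ * R := P.le_opNorm_of_le hm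
  refine ⟨m, hmL, ?_, ?_⟩
  · rw [dual_directionalScaling hφv, abs_mul, abs_inv, abs_of_pos (by positivity),
      inv_mul_le_iff₀ (by positivity), mul_comm] at hΦm
    exact hΦm.trans (by gcongr; simp)
  · rw [directionalScaling_sub_dual_smul hφv, norm_smul, Real.norm_of_nonneg hs.le, mul_comm,
      ← le_div_iff₀ hs] at hPm
    exact hPm.trans (by gcongr; simp)

theorem exists_norm_add_smul_sub_le_div_rpow [IsZLattice ℝ L] (hE : 1 < finrank ℝ E)
    {f : End ℝ E} (hfL : ∀ x ∈ L, f x ∈ L) {q : ℚ[X]} (hq : Irreducible q)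
    (hfq : f.charpoly = q.map (algebraMap ℚ ℝ)) {μ : ℝ} {v : E} (hv : f.HasEigenvector μ v) :
    ∃ c > 0, ∀ D > 0, ∀ z, ∃ t ∈ Set.Icc 0 D, ∃ m ∈ L,
      ‖z + t • v - m‖ ≤ c / D ^ (1 / ((finrank ℝ E : ℝ) - 1)) := by
  have hf : f.IsSemisimple := Module.End.isSemisimple_of_squarefree_aeval_eq_zero
    (hfq ▸ hq.separable.map).squarefree f.aeval_self_charpoly
  obtain ⟨φ, hφv, hφf⟩ := exists_dual_eigenvector_of_isSemisimple hf hv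
  obtain ⟨c, hc, hcover⟩ := exists_abs_dual_le_and_norm_sub_le hfL
    (fun x hxL hx ↦ isCyclicVector_of_mem_lattice hfL hq hfq hxL hx) hv.apply_eq_smul hφv hφf
  set e : ℝ := 1 / ((finrank ℝ E : ℝ) - 1) with he
  refine ⟨c * (2 * c) ^ e, by positivity, fun D hD z ↦ ?_⟩
  set s : ℝ := (D / (2 * c)) ^ e with hs
  have hsD : c * s ^ (finrank ℝ E - 1) = D / 2 := by
    have hexp : e * (finrank ℝ E - 1 : ℕ) = 1 := by
      rw [he, Nat.cast_pred (by lia), one_div_mul_cancel]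
      exact sub_ne_zero.mpr (by exact_mod_cast hE.ne')
    rw [hs, ← Real.rpow_mul_natCast (by positivity), hexp, Real.rpow_one]
    field_simp
  obtain ⟨m, hmL, hφm, hm⟩ := hcover s (by positivity) (z + (D / 2) • v)
  rw [hsD, abs_le] at hφm
  refine ⟨D / 2 - φ (z + (D / 2) • v - m), ⟨by linarith, by linarith⟩, m, hmL, ?_⟩
  calc ‖z + (D / 2 - φ (z + (D / 2) • v - m)) • v - m‖
      = ‖z + (D / 2) • v - m - φ (z + (D / 2) • v - m) • v‖ := by congr 1; module
    _ ≤ c / s := hm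
    _ = c * (2 * c) ^ e / D ^ e := by
      rw [hs, Real.div_rpow hD.le (by positivity), div_div_eq_mul_div]

end Lattice

section Matrix

variable {ι : Type*} [Fintype ι]

lemma mem_span_int_basisFun_iff {x : EuclideanSpace ℝ ι} :
    x ∈ Submodule.span ℤ (Set.range (EuclideanSpace.basisFun ι ℝ).toBasis) ↔
      ∃ m : ι → ℤ, x = WithLp.toLp 2 fun i ↦ (m i : ℝ) := by
  rw [Basis.mem_span_iff_repr_mem]
  constructor
  · intro h
    choose m hm using h
    exact ⟨m, by ext i; simpa using (hm i).symm⟩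
  · rintro ⟨m, rfl⟩ i
    exact ⟨m i, by simp⟩

theorem stmt10_general [DecidableEq ι] [Nontrivial ι] (M : Matrix ι ι ℤ)
    (hirr : Irreducible (M.map (Int.cast : ℤ → ℚ)).charpoly) (μ : ℝ)
    (v : EuclideanSpace ℝ ι) (hv : v ≠ 0)
    (heig : Matrix.toEuclideanLin (M.map (Int.cast : ℤ → ℝ)) v = μ • v) :
    ∃ C₀ : ℝ, 0 < C₀ ∧ ∀ D : ℝ, 0 < D → ∀ x₀ y : EuclideanSpace ℝ ι,
      ∃ t ∈ Set.Icc (0 : ℝ) D, ∃ m : ι → ℤ,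
        ‖x₀ + t • v - y - (EuclideanSpace.equiv ι ℝ).symm (fun i => (m i : ℝ))‖ ≤
          C₀ / D ^ (1 / ((Fintype.card ι : ℝ) - 1)) := by
  let f : End ℝ (EuclideanSpace ℝ ι) := Matrix.toEuclideanLin (M.map (Int.cast : ℤ → ℝ))
  have hfL : ∀ x ∈ Submodule.span ℤ (Set.range (EuclideanSpace.basisFun ι ℝ).toBasis),
      f x ∈ Submodule.span ℤ (Set.range (EuclideanSpace.basisFun ι ℝ).toBasis) := by
    simp only [mem_span_int_basisFun_iff]
    rintro _ ⟨m, rfl⟩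
    exact ⟨M.mulVec m, by ext i; simp [f, Matrix.mulVec, dotProduct]⟩
  have hcharpoly :
      f.charpoly = (M.map (Int.cast : ℤ → ℚ)).charpoly.map (algebraMap ℚ ℝ) := by
    rw [← Matrix.charpoly_map, Matrix.map_map]
    simp only [f, Matrix.toEuclideanLin, Matrix.toLpLin_eq_toLin]
    rw [Matrix.charpoly_toLin]
    congr 1
  obtain ⟨c, hc, hdense⟩ := exists_norm_add_smul_sub_le_div_rpow
    (by simpa using Fintype.one_lt_card) hfL hirr hcharpoly
    (Module.End.hasEigenvector_iff.mpr ⟨Module.End.mem_eigenspace_iff.mpr heig, hv⟩)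
  refine ⟨c, hc, fun D hD x₀ y ↦ ?_⟩
  obtain ⟨t, ht, x, hx, htx⟩ := hdense D hD (x₀ - y)
  obtain ⟨m, rfl⟩ := mem_span_int_basisFun_iff.mp hx
  rw [finrank_euclideanSpace, sub_add_eq_add_sub] at htx
  exact ⟨t, ht, m, htx⟩

end Matrix

/-- Let `M` be a 3×3 integer matrix with determinant ±1 whose
characteristic polynomial is irreducible over ℚ and has three real roots
`ν < 1 < μ < λ` (with `ν > 0`), and let `v` be a unit eigenvector of `M`
(viewed over ℝ) for the eigenvalue `μ`. Then there is `C > 0` such that for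
every `D ≥ 1` and all `x₀, y ∈ ℝ³` there exist `t ∈ [0, D]` and `m ∈ ℤ³` with
`‖x₀ + t·v − y − m‖ ≤ C/√D`; i.e. any arc of length `D` of a line in direction
`v` projects to a `C/√D`-dense subset of the torus `ℝ³/ℤ³`. -/
theorem stmt10
    (M : Matrix (Fin 3) (Fin 3) ℤ)
    (hdet : M.det = 1 ∨ M.det = -1)
    (hirr : Irreducible (Matrix.charpoly (M.map (Int.cast : ℤ → ℚ))))
    (ν μ lam : ℝ) (hν0 : 0 < ν) (hν1 : ν < 1) (hμ1 : 1 < μ) (hμlam : μ < lam)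
    (hchar : Matrix.charpoly (M.map (Int.cast : ℤ → ℝ)) =
      (X - C ν) * (X - C μ) * (X - C lam))
    (v : EuclideanSpace ℝ (Fin 3)) (hv : ‖v‖ = 1)
    (heig : Matrix.toEuclideanLin (M.map (Int.cast : ℤ → ℝ)) v = μ • v) :
    ∃ C₀ : ℝ, 0 < C₀ ∧ ∀ D : ℝ, 1 ≤ D → ∀ x₀ y : EuclideanSpace ℝ (Fin 3),
      ∃ t ∈ Set.Icc (0 : ℝ) D, ∃ m : Fin 3 → ℤ,
        ‖x₀ + t • v - y - (EuclideanSpace.equiv (Fin 3) ℝ).symm (fun i => (m i : ℝ))‖ ≤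
          C₀ / Real.sqrt D := by
  obtain ⟨c, hc, hdense⟩ := stmt10_general M hirr μ v (norm_ne_zero_iff.mp (by simp [hv])) heig
  exact ⟨c, hc, fun D hD ↦ by
    simpa [Real.sqrt_eq_rpow, show (3 : ℝ) - 1 = 2 by norm_num] using hdense D (by linarith)⟩
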